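/- arXiv:2603.08941 — 5 statements merged into one kernel-verified Lean document; each statement's English description precedes it below -/
import Mathlib

section
/- Let F be a finite field, let C ⊆ F^n be a linear code of dimension k with generator matrix G ∈ F^{n×k}, let k' < k, and let Enc be the k'-randomized encoding map for G. Set C_X = C and let C_Z ⊆ F^n be the orthogonal complement of the span of the last k−k' columns of G, and let d_X be the minimum Hamming weight of a vector in C_X \ C_Z^⊥. Then for every e ∈ ℕ: d_X > 2e if and only if Enc is decodable from e errors. -/
/-- Concatenation `(m, r) ∈ F^k` of a message `m ∈ F^{k'}` (first `k'` coordinates)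
with randomness `r ∈ F^{k-k'}` (last `k - k'` coordinates). -/
def concat {F : Type*} {k k' : ℕ} (m : Fin k' → F) (r : Fin (k - k') → F) : Fin k → F :=
  fun j => if hj : (j : ℕ) < k' then m ⟨j, hj⟩
           else r ⟨(j : ℕ) - k', by have := j.isLt; omega⟩

/-- The orthogonal complement `W^⊥` of a subspace `W ⊆ F^n` with respect to the
bilinear form `⟨u,v⟩ = ∑ i, u i * v i`. -/
def dualCode {F : Type*} [Field F] {n : ℕ} (W : Submodule F (Fin n → F)) :
    Submodule F (Fin n → F) where
  carrier := {u | ∀ w ∈ W, ∑ i, u i * w i = 0}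
  add_mem' := by
    intro a b ha hb w hw
    simp only [Set.mem_setOf_eq] at *
    simp [Pi.add_apply, add_mul, Finset.sum_add_distrib, ha w hw, hb w hw]
  zero_mem' := by intro w hw; simp
  smul_mem' := by
    intro c a ha w hw
    simp only [Set.mem_setOf_eq] at *
    simp [Pi.smul_apply, smul_eq_mul, mul_assoc, ← Finset.mul_sum, ha w hw]

/-- The span of the last `k - k'` columns of `G` (the columns with index `≥ k'`). -/
def lastColSpan {F : Type*} [Field F] {n k : ℕ} (G : Matrix (Fin n) (Fin k) F) (k' : ℕ) :
    Submodule F (Fin n → F) :=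
  Submodule.span F {v | ∃ j : Fin k, k' ≤ (j : ℕ) ∧ v = fun i => G i j}

/-- The `k'`-randomized encoding map for `G` is decodable from `e` errors: there is a
deterministic decoder `D` recovering `m` from `G·(m,r) + y` whenever `wt(y) ≤ e`. -/
def DecodableFromErrors {F : Type*} [Field F] [DecidableEq F] {n k : ℕ}
    (G : Matrix (Fin n) (Fin k) F) (k' e : ℕ) : Prop :=
  ∃ D : (Fin n → F) → (Fin k' → F),
    ∀ (m : Fin k' → F) (r : Fin (k - k') → F) (y : Fin n → F),
      hammingNorm y ≤ e → D (G.mulVec (concat m r) + y) = m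

/-- The `k'`-randomized encoding map for `G` is `t`-zero-knowledge: for every set `I` of `t`
coordinates and every pair of messages `m, m'`, the restrictions `Enc(m)|_I` and `Enc(m')|_I`
are identically distributed (over uniformly random `r`), i.e. each value `v ∈ F^I` is hit by
the same number of choices of randomness `r`. -/
def IsZK {F : Type*} [Field F] {n k : ℕ} (G : Matrix (Fin n) (Fin k) F) (k' t : ℕ) : Prop :=
  ∀ I : Finset (Fin n), I.card = t →
    ∀ m m' : Fin k' → F, ∀ v : {i // i ∈ I} → F,
      Nat.card {r : Fin (k - k') → F //
          ∀ i : {i // i ∈ I}, G.mulVec (concat m r) i.1 = v i} =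
      Nat.card {r : Fin (k - k') → F //
          ∀ i : {i // i ∈ I}, G.mulVec (concat m' r) i.1 = v i}

theorem concat_sub' {F : Type*} [Field F] {k k' : ℕ} (m m' : Fin k' → F)
    (r r' : Fin (k - k') → F) :
    (concat m r - concat m' r' : Fin k → F) = concat (m - m') (r - r') := by
  funext j
  simp only [concat, Pi.sub_apply]
  split_ifs <;> rfl

theorem concat_split {F : Type*} [Field F] {k k' : ℕ} (hk : k' < k) (x : Fin k → F) :
    x = concat (fun i : Fin k' => x ⟨i, by omega⟩)
      (fun i : Fin (k - k') => x ⟨i + k', by omega⟩) := by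
  funext j
  simp only [concat]
  split_ifs with h
  · rfl
  · congr 1
    apply Fin.ext
    simp
    omega

theorem concat_msg {F : Type*} [Field F] {k k' : ℕ} (hk : k' < k) {m m' : Fin k' → F}
    {r r' : Fin (k - k') → F} (h : (concat m r : Fin k → F) = concat m' r') : m = m' := by
  funext i
  have := congrFun h ⟨i, by omega⟩
  simpa [concat] using this

theorem mem_last {F : Type*} [Field F] {n k k' : ℕ} (hk : k' < k)
    (G : Matrix (Fin n) (Fin k) F) (v : Fin n → F) :
    v ∈ lastColSpan G k' → ∃ x : Fin k → F, (∀ j : Fin k, (j : ℕ) < k' → x j = 0) ∧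
      G.mulVec x = v := by
  intro hv
  unfold lastColSpan at hv
  induction hv using Submodule.span_induction with
  | mem v h =>
    obtain ⟨j, hj, rfl⟩ := h
    refine ⟨Pi.single j 1, ?_, ?_⟩
    · intro i hi
      apply Pi.single_eq_of_ne
      rintro rfl
      omega
    · simp [Matrix.mulVec_single_one]
      rfl
  | zero => exact ⟨0, by simp, by simp⟩
  | add a b _ _ ha hb =>
    obtain ⟨x, hx, rfl⟩ := ha
    obtain ⟨y, hy, rfl⟩ := hb
    exact ⟨x + y, fun j hj => by simp [hx j hj, hy j hj], Matrix.mulVec_add _ _ _⟩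
  | smul c a _ ha =>
    obtain ⟨x, hx, rfl⟩ := ha
    exact ⟨c • x, fun j hj => by simp [hx j hj], Matrix.mulVec_smul _ _ _⟩

theorem enc_mem_iff {F : Type*} [Field F] {n k k' : ℕ} (hk : k' < k)
    (G : Matrix (Fin n) (Fin k) F) (hG : Function.Injective G.mulVecLin)
    (m : Fin k' → F) (r : Fin (k - k') → F) :
    G.mulVec (concat m r) ∈ lastColSpan G k' ↔ m = 0 := by
  constructor
  · intro h
    obtain ⟨x, hx, h⟩ := mem_last hk G _ h
    have h2 : x = concat m r := hG h
    funext i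
    have h3 := hx ⟨i, by omega⟩ i.2
    rw [h2] at h3
    simpa [concat] using h3
  · rintro rfl
    rw [Matrix.mulVec_eq_sum]
    refine Submodule.sum_mem _ fun j _ => ?_
    by_cases hj : (j : ℕ) < k'
    · simp [concat, hj]
    · have : (fun i => G i j) ∈ lastColSpan G k' :=
        Submodule.subset_span ⟨j, by omega, rfl⟩
      have h2 := Submodule.smul_mem _ (concat 0 r j) this
      simp only [op_smul_eq_smul]
      exact h2

theorem dual_dual {F : Type*} [Field F] {n : ℕ} (W : Submodule F (Fin n → F)) :
    dualCode (dualCode W) = W := by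
  apply le_antisymm
  · intro v hv
    by_contra hvW
    obtain ⟨f, hf, hfW⟩ := Submodule.exists_le_ker_of_notMem hvW
    have key : ∀ x, f x = ∑ i, f (Pi.single i 1) * x i := by
      intro x
      conv_lhs => rw [LinearMap.pi_apply_eq_sum_univ f x]
      refine Finset.sum_congr rfl fun i _ => ?_
      rw [smul_eq_mul, mul_comm]
      congr 2
      funext j
      simp [Pi.single_apply, eq_comm]
    apply hf
    have := hv (fun i => f (Pi.single i 1)) (by
      intro w hw
      rw [← key]
      exact hfW hw)
    rw [key, ← this]
    exact Finset.sum_congr rfl fun i _ => mul_comm _ _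
  · intro v hv u hu
    rw [← hu v hv]
    exact Finset.sum_congr rfl fun i _ => mul_comm _ _

theorem weight_split {F : Type*} [Field F] [DecidableEq F] {n e : ℕ} (c : Fin n → F)
    (hc : hammingNorm c ≤ 2 * e) :
    ∃ y : Fin n → F, hammingNorm y ≤ e ∧ hammingNorm (c + y) ≤ e := by
  classical
  unfold hammingNorm at hc
  obtain ⟨S, hS, hcard⟩ := Finset.exists_subset_card_eq
    (s := Finset.univ.filter fun i => c i ≠ 0)
    (min_le_right e (Finset.univ.filter fun i => c i ≠ 0).card)
  refine ⟨fun i => if i ∈ S then - c i else 0, ?_, ?_⟩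
  · refine (Finset.card_le_card (t := S) ?_).trans (by omega)
    intro i hi
    by_contra h
    simp [h] at hi
  · refine (Finset.card_le_card (t := (Finset.univ.filter fun i => c i ≠ 0) \ S) ?_).trans ?_
    · intro i hi
      by_cases h : i ∈ S
      · simp [h] at hi
      · simpa [h] using hi
    · rw [Finset.card_sdiff_of_subset hS]
      omega

/-- With `C_X = C`, `C_Z` the orthogonal complement of the span of the last
`k - k'` columns of the generator matrix `G`, and `d_X` the minimum Hamming weight of a vector
in `C_X \ C_Z^⊥`: for every `e ∈ ℕ`, `d_X > 2e` iff the `k'`-randomized encoding map for `G`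
is decodable from `e` errors. -/
theorem dX_iff_decodable
    {F : Type*} [Field F] [Fintype F] [DecidableEq F] {n k k' : ℕ}
    (C : Submodule F (Fin n → F)) (G : Matrix (Fin n) (Fin k) F)
    (hGfullrank : Function.Injective G.mulVecLin)
    (hGspan : LinearMap.range G.mulVecLin = C)
    (hdim : Module.finrank F C = k)
    (hk' : k' < k)
    (CX CZ : Submodule F (Fin n → F))
    (hCX : CX = C)
    (hCZ : CZ = dualCode (lastColSpan G k'))
    (dX : ℕ)
    (hdX : IsLeast {w | ∃ c, c ∈ CX ∧ c ∉ dualCode CZ ∧ hammingNorm c = w} dX) :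
    ∀ e : ℕ, 2 * e < dX ↔ DecodableFromErrors G k' e := by
  intro e
  subst hCX hCZ
  rw [dual_dual] at hdX
  constructor
  · intro he
    classical
    refine ⟨fun z => if h : ∃ m : Fin k' → F, ∃ (r : Fin (k - k') → F) (y : Fin n → F),
      hammingNorm y ≤ e ∧ G.mulVec (concat m r) + y = z then h.choose else 0, ?_⟩
    intro m r y hy
    have h : ∃ m' : Fin k' → F, ∃ (r' : Fin (k - k') → F) (y' : Fin n → F),
      hammingNorm y' ≤ e ∧ G.mulVec (concat m' r') + y' = G.mulVec (concat m r) + y :=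
      ⟨m, r, y, hy, rfl⟩
    dsimp only
    rw [dif_pos h]
    obtain ⟨r', y', hy', heq⟩ := h.choose_spec
    generalize h.choose = m' at heq ⊢
    by_contra hne
    have h1 : G.mulVec (concat (m' - m) (r' - r)) = y - y' := by
      rw [← concat_sub', Matrix.mulVec_sub, sub_eq_sub_iff_add_eq_add, heq, add_comm]
    have h2 := hdX.2 ⟨G.mulVec (concat (m' - m) (r' - r)), hGspan ▸ ⟨_, rfl⟩, by
      rw [enc_mem_iff hk' G hGfullrank]
      exact sub_ne_zero.mpr hne, rfl⟩
    rw [h1, sub_eq_neg_add, ← hammingDist_eq_hammingNorm] at h2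
    have h3 := hammingDist_triangle y' 0 y
    rw [hammingDist_zero_right, hammingDist_zero_left] at h3
    omega
  · rintro ⟨D, hD⟩
    by_contra! hle
    obtain ⟨c, hc, hcn, hw⟩ := hdX.1
    rw [← hGspan] at hc
    obtain ⟨x, rfl⟩ := hc
    rw [Matrix.mulVecLin_apply, concat_split hk' x] at hcn hw
    obtain ⟨y, hy, hcy⟩ := weight_split _ (hw.trans_le hle)
    have h0 : (concat (0 : Fin k' → F) (0 : Fin (k - k') → F) : Fin k → F) = 0 := by
      funext j
      simp [concat]
    have h2 := hD 0 0 _ hcy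
    rw [h0, Matrix.mulVec_zero, zero_add, hD _ _ y hy] at h2
    exact hcn ((enc_mem_iff hk' G hGfullrank _ _).2 h2)
end

section
/- Let F be a finite field and let C_X, C_Z ⊆ F^n be linear codes with C_Z^⊥ ⊆ C_X and C_X^⊥ ⊆ C_Z (i.e., (C_X, C_Z) is a CSS code). Let k = dim(C_X) and k' = k − dim(C_Z^⊥). Let G ∈ F^{n×k} be a generator matrix for C_X whose last k−k' columns form a basis for C_Z^⊥, and let Enc be the k'-randomized encoding map for G. Let d_X be the minimum Hamming weight of a vector in C_X \ C_Z^⊥. Then for every e ∈ ℕ: d_X > 2e if and only if Enc is decodable from e errors. -/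
lemma concat_apply_lt {F : Type*} {k k' : ℕ} (m : Fin k' → F) (r : Fin (k - k') → F)
    (j : Fin k) (hj : (j : ℕ) < k') : concat m r j = m ⟨j, hj⟩ := by
  simp [concat, hj]

lemma exists_concat {F : Type*} {k k' : ℕ} (hkk : k' ≤ k) (x : Fin k → F) :
    ∃ (m : Fin k' → F) (r : Fin (k - k') → F), concat m r = x := by
  refine ⟨fun i => x ⟨i, by omega⟩, fun i => x ⟨k' + i, by omega⟩, ?_⟩
  funext j
  unfold concat
  split_ifs with hj
  · rfl
  · exact congrArg x (Fin.ext (show k' + ((j : ℕ) - k') = j by omega))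

lemma exists_of_mem_lastColSpan {F : Type*} [Field F] {n k : ℕ}
    (G : Matrix (Fin n) (Fin k) F) (k' : ℕ) (v : Fin n → F) (hv : v ∈ lastColSpan G k') :
    ∃ x : Fin k → F, G.mulVecLin x = v ∧ ∀ j : Fin k, (j : ℕ) < k' → x j = 0 := by
  unfold lastColSpan at hv
  induction hv using Submodule.span_induction with
  | mem v h =>
    obtain ⟨j, hj, rfl⟩ := h
    refine ⟨Pi.single j 1, ?_, ?_⟩
    · ext i
      simp
    · intro i hi
      have : i ≠ j := by rintro rfl; omega
      simp [this]
  | zero => exact ⟨0, by simp, by simp⟩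
  | add a b _ _ ha hb =>
    obtain ⟨x, hx, hx0⟩ := ha
    obtain ⟨y, hy, hy0⟩ := hb
    refine ⟨x + y, by rw [map_add, hx, hy], fun j hj => by simp [hx0 j hj, hy0 j hj]⟩
  | smul c a _ ha =>
    obtain ⟨x, hx, hx0⟩ := ha
    exact ⟨c • x, by rw [map_smul, hx], fun j hj => by simp [hx0 j hj]⟩

lemma mem_lastColSpan {F : Type*} [Field F] {n k : ℕ}
    (G : Matrix (Fin n) (Fin k) F) (k' : ℕ) (x : Fin k → F)
    (hx : ∀ j : Fin k, (j : ℕ) < k' → x j = 0) : G.mulVecLin x ∈ lastColSpan G k' := by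
  have : G.mulVecLin x = ∑ j, x j • (fun i => G i j) := by
    ext i
    simp [Matrix.mulVec, dotProduct, Finset.sum_apply, mul_comm]
  rw [this]
  refine Submodule.sum_mem _ fun j _ => ?_
  by_cases hj : (j : ℕ) < k'
  · simp [hx j hj]
  · exact Submodule.smul_mem _ _ (Submodule.subset_span ⟨j, by omega, rfl⟩)

lemma split_weight {F : Type*} [Field F] [DecidableEq F] {n : ℕ} (c : Fin n → F) (e : ℕ)
    (hc : hammingNorm c ≤ 2 * e) :
    ∃ a b : Fin n → F, c = a + b ∧ hammingNorm a ≤ e ∧ hammingNorm b ≤ e := by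
  classical
  unfold hammingNorm at *
  obtain ⟨S, hS, hcard⟩ := Finset.exists_subset_card_eq
    (s := Finset.univ.filter fun i => c i ≠ 0) (Nat.min_le_right e _)
  refine ⟨fun i => if i ∈ S then c i else 0, fun i => if i ∈ S then 0 else c i, ?_, ?_, ?_⟩
  · funext i
    by_cases h : i ∈ S <;> simp [h]
  · refine (Finset.card_le_card (t := S) ?_).trans (by omega)
    intro i
    simp +contextual
  · refine (Finset.card_le_card (t := (Finset.univ.filter fun i => c i ≠ 0) \ S) ?_).trans ?_
    · intro i
      simp +contextual
    · rw [Finset.card_sdiff_of_subset hS]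
      omega

/-- Let `(C_X, C_Z)` be a CSS code (`C_Z^⊥ ⊆ C_X` and `C_X^⊥ ⊆ C_Z`),
let `k = dim C_X`, `k' = k - dim C_Z^⊥`, and let `G` be a generator matrix for `C_X` whose
last `k - k'` columns form a basis for `C_Z^⊥`. With `d_X` the minimum Hamming weight of a
vector in `C_X \ C_Z^⊥`: for every `e ∈ ℕ`, `d_X > 2e` iff the `k'`-randomized encoding map
for `G` is decodable from `e` errors. -/
theorem css_dX_iff_decodable
    {F : Type*} [Field F] [Fintype F] [DecidableEq F] {n : ℕ}
    (CX CZ : Submodule F (Fin n → F))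
    (hZX : dualCode CZ ≤ CX) (hXZ : dualCode CX ≤ CZ)
    (k k' : ℕ)
    (hk : k = Module.finrank F CX)
    (hk' : k' = k - Module.finrank F (dualCode CZ))
    (G : Matrix (Fin n) (Fin k) F)
    (hGfullrank : Function.Injective G.mulVecLin)
    (hGspan : LinearMap.range G.mulVecLin = CX)
    (hlast : lastColSpan G k' = dualCode CZ)
    (dX : ℕ)
    (hdX : IsLeast {w | ∃ c, c ∈ CX ∧ c ∉ dualCode CZ ∧ hammingNorm c = w} dX) :
    ∀ e : ℕ, 2 * e < dX ↔ DecodableFromErrors G k' e := by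
  intro e
  have hkk : k' ≤ k := by omega
  constructor
  · intro he
    have huniq : ∀ (m m' : Fin k' → F) (r r' : Fin (k - k') → F) (y y' : Fin n → F),
        hammingNorm y ≤ e → hammingNorm y' ≤ e →
        G.mulVec (concat m r) + y = G.mulVec (concat m' r') + y' → m = m' := by
      intro m m' r r' y y' hy hy' h
      have hd : G.mulVecLin (concat m r - concat m' r') = y' - y := by
        rw [map_sub, Matrix.mulVecLin_apply, Matrix.mulVecLin_apply, sub_eq_sub_iff_add_eq_add, h,
          add_comm]
      have hw : hammingNorm (y' - y) ≤ 2 * e := by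
        have h1 := hammingDist_triangle y' 0 y
        rw [hammingDist_zero_right, hammingDist_zero_left, hammingDist_eq_hammingNorm] at h1
        have h2 : hammingNorm (-y' + y) = hammingNorm (y' - y) := by
          have h3 := hammingDist_comm y' y
          rw [hammingDist_eq_hammingNorm, hammingDist_eq_hammingNorm] at h3
          first
            | (rw [h3]; congr 1; abel)
            | (congr 1; abel)
        omega
      have hmem : G.mulVecLin (concat m r - concat m' r') ∈ lastColSpan G k' := by
        rw [hlast]
        by_contra hn
        have h1 := hdX.2 ⟨_, hGspan ▸ LinearMap.mem_range_self _ _, hn, rfl⟩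
        rw [hd] at h1
        omega
      obtain ⟨x, hx, hx0⟩ := exists_of_mem_lastColSpan G k' _ hmem
      have hx' := hGfullrank hx
      funext i
      have h1 := hx0 ⟨i, by omega⟩ i.2
      rw [hx', Pi.sub_apply, concat_apply_lt m r ⟨i, by omega⟩ i.2,
        concat_apply_lt m' r' ⟨i, by omega⟩ i.2] at h1
      exact sub_eq_zero.mp h1
    classical
    refine ⟨fun z => if h : ∃ m : Fin k' → F, ∃ (r : Fin (k - k') → F) (y : Fin n → F),
      hammingNorm y ≤ e ∧ G.mulVec (concat m r) + y = z then h.choose else 0, ?_⟩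
    intro m r y hy
    have h : ∃ m' : Fin k' → F, ∃ (r' : Fin (k - k') → F) (y' : Fin n → F),
      hammingNorm y' ≤ e ∧ G.mulVec (concat m' r') + y' = G.mulVec (concat m r) + y :=
      ⟨m, r, y, hy, rfl⟩
    simp only [dif_pos h]
    obtain ⟨r', y', hy', heq⟩ := h.choose_spec
    exact huniq _ _ _ _ _ _ hy' hy heq
  · rintro ⟨D, hD⟩
    by_contra hlt
    obtain ⟨c, hc, hcn, hcw⟩ := hdX.1
    obtain ⟨a, b, hab, ha, hb⟩ := split_weight c e (by omega)
    rw [← hGspan] at hc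
    obtain ⟨x, hx⟩ := hc
    obtain ⟨m, r, rfl⟩ := exists_concat hkk x
    have hna : hammingNorm (-a) ≤ e := by
      simpa [hammingNorm] using ha
    have h1 := hD m r (-a) hna
    have h2 := hD 0 0 b hb
    have h0 : concat (0 : Fin k' → F) (0 : Fin (k - k') → F) = 0 := by
      funext j
      simp [concat]
    rw [← Matrix.mulVecLin_apply, hx, hab] at h1
    rw [h0, Matrix.mulVec_zero, zero_add] at h2
    rw [show a + b + -a = b by abel, h2] at h1
    apply hcn
    rw [← hlast, ← hx]
    apply mem_lastColSpan
    intro j hj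
    rw [concat_apply_lt _ _ _ hj, ← h1]
    rfl
end

section
/- Let F be a finite field, let C ⊆ F^n be a linear code of dimension k with generator matrix G ∈ F^{n×k}, let k' < k and t < n, and let Enc be the k'-randomized encoding map for G. Then Enc is t-ZK if and only if for every vector u ∈ F^n with wt(u) ≤ t, the vector w = uᵀ·G ∈ F^k does not satisfy both w ≠ 0 and w_j = 0 for all j ∈ [k] \ [k'] (i.e., no linear combination of at most t rows of G yields a nonzero vector whose last k−k' coordinates all vanish). -/
theorem concat_add_aux {F : Type*} [Field F] {k k' : ℕ} (m m' : Fin k' → F)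
    (r r' : Fin (k - k') → F) :
    (concat (m + m') (r + r') : Fin k → F) = concat m r + concat m' r' := by
  funext j
  simp only [concat, Pi.add_apply]
  split_ifs <;> rfl

theorem concat_smul_aux {F : Type*} [Field F] {k k' : ℕ} (c : F) (m : Fin k' → F)
    (r : Fin (k - k') → F) :
    (concat (c • m) (c • r) : Fin k → F) = c • concat m r := by
  funext j
  simp only [concat, Pi.smul_apply]
  split_ifs <;> rfl

theorem concat_zero_aux {F : Type*} [Field F] {k k' : ℕ} :
    (concat (0 : Fin k' → F) (0 : Fin (k - k') → F) : Fin k → F) = 0 := by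
  funext j
  simp [concat]

/-- Vectors agreeing on `I` with the encoding of the zero message for some randomness. -/
def hitSub {F : Type*} [Field F] {n k : ℕ} (G : Matrix (Fin n) (Fin k) F) (k' : ℕ)
    (I : Finset (Fin n)) : Submodule F (Fin n → F) where
  carrier := {x | ∃ r : Fin (k - k') → F, ∀ i ∈ I, x i = G.mulVec (concat (0 : Fin k' → F) r) i}
  add_mem' := by
    rintro a b ⟨r, hr⟩ ⟨s, hs⟩
    refine ⟨r + s, fun i hi => ?_⟩
    have := concat_add_aux (k := k) (0 : Fin k' → F) 0 r s
    rw [add_zero] at this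
    rw [this, Matrix.mulVec_add, Pi.add_apply, Pi.add_apply, hr i hi, hs i hi]
  zero_mem' := ⟨0, fun i _ => by rw [concat_zero_aux]; simp⟩
  smul_mem' := by
    rintro c a ⟨r, hr⟩
    refine ⟨c • r, fun i hi => ?_⟩
    have := concat_smul_aux (k := k) c (0 : Fin k' → F) r
    rw [smul_zero] at this
    rw [this, Matrix.mulVec_smul, Pi.smul_apply, Pi.smul_apply, hr i hi]

theorem exists_shift {F : Type*} [Field F] [DecidableEq F] {n k k' t : ℕ}
    (G : Matrix (Fin n) (Fin k) F)
    (h : ∀ u : Fin n → F, hammingNorm u ≤ t →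
        ¬(Matrix.vecMul u G ≠ 0 ∧ ∀ j : Fin k, k' ≤ (j : ℕ) → Matrix.vecMul u G j = 0))
    (I : Finset (Fin n)) (hI : I.card = t) (d : Fin k' → F) :
    ∃ r : Fin (k - k') → F, ∀ i ∈ I, G.mulVec (concat d r) i = 0 := by
  by_cases hd : G.mulVec (concat d 0) ∈ hitSub G k' I
  · obtain ⟨r, hr⟩ := hd
    refine ⟨-r, fun i hi => ?_⟩
    have e : (concat d 0 : Fin k → F) = concat d (-r) + concat 0 r := by
      rw [← concat_add_aux]; simp
    have := hr i hi
    rw [e, Matrix.mulVec_add, Pi.add_apply] at this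
    simpa using this
  · exfalso
    obtain ⟨f, hf, hle⟩ := Submodule.exists_le_ker_of_notMem hd
    set u : Fin n → F := fun i => f (Pi.single i 1) with hu
    have hfu : ∀ x, f x = u ⬝ᵥ x := by
      intro x
      rw [LinearMap.pi_apply_eq_sum_univ f x]
      simp only [dotProduct, hu, smul_eq_mul]
      refine Finset.sum_congr rfl fun i _ => ?_
      rw [mul_comm]
      congr 2
      funext j
      simp [Pi.single_apply, eq_comm]
    have hu0 : ∀ i, i ∉ I → u i = 0 := by
      intro i hi
      have : (Pi.single i 1 : Fin n → F) ∈ hitSub G k' I := by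
        refine ⟨0, fun l hl => ?_⟩
        rw [concat_zero_aux]
        have : l ≠ i := fun e => hi (e ▸ hl)
        simp [this]
      exact hle this
    refine h u ?_ ⟨?_, ?_⟩
    · rw [← hI]
      refine Finset.card_le_card fun i hi => ?_
      by_contra hc
      simp [hu0 i hc] at hi
    · intro h0
      apply hf
      rw [hfu, Matrix.dotProduct_mulVec, h0, zero_dotProduct]
    · intro j hj
      have hjk := j.isLt
      have e : (Pi.single j 1 : Fin k → F)
          = concat (0 : Fin k' → F) (Pi.single ⟨(j : ℕ) - k', by omega⟩ 1) := by
        funext l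
        simp only [concat, Pi.single_apply, Fin.ext_iff, Pi.zero_apply]
        split_ifs <;> first | rfl | omega
      have hm : G.mulVec (Pi.single j 1) ∈ hitSub G k' I := ⟨_, fun i _ => by rw [e]⟩
      have h1 : f (G.mulVec (Pi.single j 1)) = 0 := hle hm
      rw [hfu, Matrix.dotProduct_mulVec] at h1
      simpa using h1

theorem card_le_aux {F : Type*} [Field F] [Fintype F] {n k k' : ℕ}
    (G : Matrix (Fin n) (Fin k) F) (I : Finset (Fin n)) (m m' : Fin k' → F)
    (v : {i // i ∈ I} → F)
    (h : ∃ r : Fin (k - k') → F, ∀ i ∈ I, G.mulVec (concat (m' - m) r) i = 0) :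
      Nat.card {r : Fin (k - k') → F //
          ∀ i : {i // i ∈ I}, G.mulVec (concat m r) i.1 = v i} ≤
      Nat.card {r : Fin (k - k') → F //
          ∀ i : {i // i ∈ I}, G.mulVec (concat m' r) i.1 = v i} := by
  obtain ⟨s, hs⟩ := h
  refine Nat.card_le_card_of_injective (fun r => ⟨r.1 + s, fun i => ?_⟩) ?_
  · have e : (concat m' (r.1 + s) : Fin k → F) = concat m r.1 + concat (m' - m) s := by
      rw [← concat_add_aux]; simp
    rw [e, Matrix.mulVec_add, Pi.add_apply, hs i.1 i.2, r.2 i, add_zero]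
  · intro a b hab
    simpa [Subtype.ext_iff] using hab

/-- (Lemma: equivalent formulation of ZK.) The `k'`-randomized encoding map
for `G` is `t`-ZK iff no linear combination of at most `t` rows of `G` (i.e. `w = uᵀ·G` with
`wt(u) ≤ t`) yields a nonzero vector `w ∈ F^k` whose last `k - k'` coordinates all vanish. -/
theorem zk_iff_no_bad_combination
    {F : Type*} [Field F] [Fintype F] [DecidableEq F] {n k k' t : ℕ}
    (C : Submodule F (Fin n → F)) (G : Matrix (Fin n) (Fin k) F)
    (hGfullrank : Function.Injective G.mulVecLin)
    (hGspan : LinearMap.range G.mulVecLin = C)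
    (hdim : Module.finrank F C = k)
    (hk' : k' < k) (ht : t < n) :
    IsZK G k' t ↔
      ∀ u : Fin n → F, hammingNorm u ≤ t →
        ¬(Matrix.vecMul u G ≠ 0 ∧ ∀ j : Fin k, k' ≤ (j : ℕ) → Matrix.vecMul u G j = 0) := by
  constructor
  · rintro hz u hu ⟨hne, hlast⟩
    obtain ⟨j, hj⟩ := Function.ne_iff.mp hne
    have hjk : (j : ℕ) < k' := by
      by_contra hc
      exact hj (hlast j (by omega))
    obtain ⟨I, hsub, -, hI⟩ := Finset.exists_subsuperset_card_eq
      (Finset.subset_univ (Finset.univ.filter fun i => u i ≠ 0)) hu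
      (by simpa using ht.le)
    have hc := hz I hI 0 (Pi.single ⟨j, hjk⟩ 1) 0
    have hpos : 0 < Nat.card {r : Fin (k - k') → F //
          ∀ i : {i // i ∈ I}, G.mulVec (concat (0 : Fin k' → F) r) i.1
            = (0 : {i // i ∈ I} → F) i} := by
      haveI : Nonempty {r : Fin (k - k') → F //
          ∀ i : {i // i ∈ I}, G.mulVec (concat (0 : Fin k' → F) r) i.1
            = (0 : {i // i ∈ I} → F) i} := ⟨⟨0, fun i => by rw [concat_zero_aux]; simp⟩⟩
      exact Nat.card_pos
    rw [hc] at hpos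
    obtain ⟨⟨r, hr⟩⟩ := (Nat.card_pos_iff.mp hpos).1
    have h0 : u ⬝ᵥ G.mulVec (concat (Pi.single ⟨j, hjk⟩ 1) r) = 0 := by
      refine Finset.sum_eq_zero fun i _ => ?_
      by_cases hi : i ∈ I
      · have := hr ⟨i, hi⟩
        simp only [Pi.zero_apply] at this
        rw [this, mul_zero]
      · have : u i = 0 := by
          by_contra hui
          exact hi (hsub (by simp [hui]))
        rw [this, zero_mul]
    rw [Matrix.dotProduct_mulVec, dotProduct, Finset.sum_eq_single j] at h0
    · apply hj
      simpa [concat, hjk] using h0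
    · intro l _ hl
      by_cases hlk : (l : ℕ) < k'
      · have : (l : ℕ) ≠ j := fun e => hl (Fin.ext e)
        simp [concat, hlk, Pi.single_apply, this]
      · rw [hlast l (by omega), zero_mul]
    · simp
  · intro h I hI m m' v
    exact le_antisymm (card_le_aux G I m m' v (exists_shift G h I hI _))
      (card_le_aux G I m' m v (exists_shift G h I hI _))
end

section
/- Let F be a finite field, let G ∈ F^{n×k} be a matrix, let k' < k, let Enc be the k'-randomized encoding map for G, and fix a subset I ⊆ [n]. Then the following are equivalent: (i) for every pair of messages m, m' ∈ F^{k'}, the random variables Enc(m)|_I and Enc(m')|_I are identically distributed (i.e., for every v ∈ F^I, the number of r ∈ F^{k−k'} with (G·(m,r))|_I = v equals the number of r with (G·(m',r))|_I = v); (ii) for every m ∈ F^{k'} there exists r ∈ F^{k−k'} such that (G·(m,r))|_I = 0. -/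
/-- (Claim 1.) For a fixed set `I` of coordinates, the restrictions
`Enc(m)|_I` and `Enc(m')|_I` are identically distributed for every pair of messages `m, m'`
iff for every message `m` the all-zeros pattern is in the support of `Enc(m)|_I`. -/
theorem identical_iff_zero_in_support
    {F : Type*} [Field F] [Fintype F] {n k k' : ℕ} (hk' : k' < k)
    (G : Matrix (Fin n) (Fin k) F) (I : Finset (Fin n)) :
    (∀ m m' : Fin k' → F, ∀ v : {i // i ∈ I} → F,
        Nat.card {r : Fin (k - k') → F //
            ∀ i : {i // i ∈ I}, G.mulVec (concat m r) i.1 = v i} =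
        Nat.card {r : Fin (k - k') → F //
            ∀ i : {i // i ∈ I}, G.mulVec (concat m' r) i.1 = v i}) ↔
    (∀ m : Fin k' → F, ∃ r : Fin (k - k') → F, ∀ i ∈ I, G.mulVec (concat m r) i = 0) := by
  constructor
  · intro h m
    have h0 := h m 0 (fun _ => 0)
    have hz : concat (k := k) (0 : Fin k' → F) (0 : Fin (k - k') → F) = 0 := by
      funext j; simp [concat]
    have hne : Nonempty {r : Fin (k - k') → F //
        ∀ i : {i // i ∈ I}, G.mulVec (concat (0 : Fin k' → F) r) i.1 = 0} :=
      ⟨⟨0, fun i => by rw [hz]; simp⟩⟩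
    have hpos := Nat.card_pos (α := {r : Fin (k - k') → F //
        ∀ i : {i // i ∈ I}, G.mulVec (concat (0 : Fin k' → F) r) i.1 = 0})
    rw [← h0] at hpos
    obtain ⟨⟨r, hr⟩⟩ := (Nat.card_pos_iff.mp hpos).1
    exact ⟨r, fun i hi => hr ⟨i, hi⟩⟩
  · intro h m m' v
    obtain ⟨s, hs⟩ := h (m' - m)
    have hc : ∀ r : Fin (k - k') → F,
        concat (k := k) m' (r + s) = concat m r + concat (m' - m) s := by
      intro r
      funext j
      by_cases hj : (j : ℕ) < k' <;> simp [concat, hj]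
    refine Nat.card_congr ((Equiv.addRight s).subtypeEquiv ?_)
    intro r
    refine forall_congr' fun i => ?_
    rw [Equiv.coe_addRight, hc, Matrix.mulVec_add, Pi.add_apply, hs i.1 i.2, add_zero]
end

section
/- Let F be a finite field, let G ∈ F^{n×k} be a matrix, let k' < k, and let e ∈ ℕ. Then the following are equivalent: (i) there exists a deterministic function D : F^n → F^{k'} such that for every m ∈ F^{k'}, every r ∈ F^{k−k'}, and every y ∈ F^n with wt(y) ≤ e, D(G·(m,r) + y) = m; (ii) for every pair of distinct messages m ≠ m' ∈ F^{k'} and every (not necessarily distinct) r, r' ∈ F^{k−k'}, Δ(G·(m,r), G·(m',r')) > 2e. -/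
/-- Two words at distance at most `2e` have a common word at distance at most `e` from both. -/
theorem exists_midpoint_aux {F : Type*} [DecidableEq F] {n : ℕ} (u v : Fin n → F) (e : ℕ)
    (h : hammingDist u v ≤ 2 * e) :
    ∃ z : Fin n → F, hammingDist u z ≤ e ∧ hammingDist v z ≤ e := by
  classical
  obtain ⟨T, hTS, hT⟩ := Finset.exists_subset_card_eq
    (s := Finset.univ.filter fun i => u i ≠ v i) (n := min e (hammingDist u v))
    (min_le_right _ _)
  refine ⟨fun i => if i ∈ T then v i else u i, ?_, ?_⟩
  · have h1 : hammingDist u (fun i => if i ∈ T then v i else u i) ≤ T.card := by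
      apply Finset.card_le_card
      intro i hi
      by_contra hn
      simp [hn] at hi
    omega
  · have h1 : hammingDist v (fun i => if i ∈ T then v i else u i) ≤
        ((Finset.univ.filter fun i => u i ≠ v i) \ T).card := by
      apply Finset.card_le_card
      intro i hi
      by_cases hn : i ∈ T
      · simp [hn] at hi
      · simp [hn] at hi
        simp [hn, Ne.symm hi]
    rw [Finset.card_sdiff_of_subset hTS] at h1
    change _ ≤ hammingDist u v - T.card at h1
    omega

/-- The `k'`-randomized encoding map for `G` is decodable from `e` errors iff
encodings of distinct messages are at Hamming distance greater than `2e`. -/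
theorem decodable_iff_distance
    {F : Type*} [Field F] [Fintype F] [DecidableEq F] {n k k' : ℕ} (hk' : k' < k)
    (G : Matrix (Fin n) (Fin k) F) (e : ℕ) :
    (∃ D : (Fin n → F) → (Fin k' → F),
        ∀ (m : Fin k' → F) (r : Fin (k - k') → F) (y : Fin n → F),
          hammingNorm y ≤ e → D (G.mulVec (concat m r) + y) = m) ↔
    (∀ m m' : Fin k' → F, m ≠ m' → ∀ r r' : Fin (k - k') → F,
        2 * e < hammingDist (G.mulVec (concat m r)) (G.mulVec (concat m' r'))) := by
  have key : ∀ u y : Fin n → F, hammingDist u (u + y) = hammingNorm y := by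
    intro u y
    simp [hammingDist, hammingNorm]
  constructor
  · rintro ⟨D, hD⟩ m m' hne r r'
    by_contra hlt
    obtain ⟨z, h1, h2⟩ := exists_midpoint_aux _ _ e (not_lt.mp hlt)
    have a1 := hD m r (z - G.mulVec (concat m r)) (by rw [← key (G.mulVec (concat m r))]; simpa using h1)
    have a2 := hD m' r' (z - G.mulVec (concat m' r'))
      (by rw [← key (G.mulVec (concat m' r'))]; simpa using h2)
    rw [add_sub_cancel] at a1 a2
    exact hne (a1.symm.trans a2)
  · intro h
    classical
    refine ⟨fun w => if hw : ∃ m : Fin k' → F, ∃ r : Fin (k - k') → F,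
      hammingDist (G.mulVec (concat m r)) w ≤ e then hw.choose else 0, ?_⟩
    intro m r y hy
    have hw : ∃ m₁ : Fin k' → F, ∃ r₁ : Fin (k - k') → F,
      hammingDist (G.mulVec (concat m₁ r₁)) (G.mulVec (concat m r) + y) ≤ e :=
      ⟨m, r, by rw [key]; exact hy⟩
    simp only [dif_pos hw]
    obtain ⟨r₁, h1⟩ := hw.choose_spec
    by_contra hne
    have h2 := h _ _ hne r₁ r
    have h3 := hammingDist_triangle_right (G.mulVec (concat hw.choose r₁)) (G.mulVec (concat m r))
      (G.mulVec (concat m r) + y)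
    rw [key] at h3
    omega
end
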